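/- arXiv:1901.02734 — 4 statements merged into one kernel-verified Lean document; each statement's English description precedes it below -/
import Mathlib

section
/- Let (Ω, μ) be a measure space with μ(Ω) < ∞, let a : Ω → ℝ be a bounded measurable function, G : Ω → ℝ a nonnegative measurable function, λ > 0, m > 1, b > 0 and t > 0 real numbers with 2bt > 1, and let u : Ω → ℝ be a nonnegative measurable function. Assume the functions e^a(1+u)^{2bt−2}G, e^a(1+u)^{2bt+m−1}, e^a(1+u)^{bt+m−1} and e^a(1+u)^{m−1}((1+u)^{bt}−1)² are μ-integrable, and that (h1) b²t²∫_Ω e^a(1+u)^{2bt−2}G dμ ≥ λm∫_Ω e^a(1+u)^{m−1}((1+u)^{bt}−1)² dμ and (h2) (2bt−1)∫_Ω e^a(1+u)^{2bt−2}G dμ ≤ λ∫_Ω e^a(1+u)^{2bt+m−1} dμ. Then (1 − b²t²/(m(2bt−1))) ∫_Ω e^a(1+u)^{2bt+m−1} dμ ≤ 2 ∫_Ω e^a(1+u)^{bt+m−1} dμ. -/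
open MeasureTheory Real

/-!
Expanding the square and discarding `∫ w v ^ (m - 1) ≥ 0` bounds
`∫ w v ^ (2β + m - 1) - 2 ∫ w v ^ (β + m - 1)` by the semistability integral, where `w = e ^ a`,
`v = 1 + u` and `β = b t`. The gradient enters (h1) and (h2) only through the single number
`E = ∫ w v ^ (2β - 2) G`; eliminating `E` between them bounds the semistability integral by
`β² / (m (2β - 1))` times `∫ w v ^ (2β + m - 1)`.
-/

theorem rpow_mul_rpow_sub_one_sq {v : ℝ} (hv : 0 < v) (p q : ℝ) :
    v ^ p * (v ^ q - 1) ^ 2 = v ^ (2 * q + p) - 2 * v ^ (q + p) + v ^ p := by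
  rw [two_mul, rpow_add hv, rpow_add hv, rpow_add hv]
  ring

theorem le_div_mul_of_mul_le_mul {lam m c d E I S : ℝ} (hlam : 0 < lam) (hm : 0 < m)
    (hc : 0 ≤ c) (hd : 0 < d) (hS : lam * m * S ≤ c * E) (hE : d * E ≤ lam * I) :
    S ≤ c / (m * d) * I := by
  refine le_of_mul_le_mul_left ?_ (mul_pos hlam hm)
  calc
    lam * m * S ≤ c * E := hS
    _ ≤ c * (lam * I / d) := by
      gcongr
      exact (le_div_iff₀' hd).2 hE
    _ = lam * m * (c / (m * d) * I) := by field_simp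

section WeightedPowers

variable {Ω : Type*} [MeasurableSpace Ω] {μ : Measure Ω} {w v : Ω → ℝ}

theorem integral_rpow_sub_two_mul_integral_rpow_le {p q : ℝ}
    (hw : ∀ᵐ x ∂μ, 0 ≤ w x) (hv : ∀ᵐ x ∂μ, 0 < v x)
    (hint_double : Integrable (fun x => w x * v x ^ (2 * q + p)) μ)
    (hint_single : Integrable (fun x => w x * v x ^ (q + p)) μ)
    (hint_sq : Integrable (fun x => w x * v x ^ p * (v x ^ q - 1) ^ 2) μ) :
    ∫ x, w x * v x ^ (2 * q + p) ∂μ - 2 * ∫ x, w x * v x ^ (q + p) ∂μ ≤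
      ∫ x, w x * v x ^ p * (v x ^ q - 1) ^ 2 ∂μ := by
  rw [← integral_const_mul, ← integral_sub hint_double (hint_single.const_mul 2)]
  refine integral_mono_ae (hint_double.sub (hint_single.const_mul 2)) hint_sq ?_
  filter_upwards [hw, hv] with x hwx hvx
  have hdropped : 0 ≤ w x * v x ^ p := by positivity
  calc
    w x * v x ^ (2 * q + p) - 2 * (w x * v x ^ (q + p))
        ≤ w x * (v x ^ (2 * q + p) - 2 * v x ^ (q + p) + v x ^ p) := by linarith
    _ = w x * v x ^ p * (v x ^ q - 1) ^ 2 := by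
      rw [← rpow_mul_rpow_sub_one_sq hvx, mul_assoc]

theorem power_key_combination_step_general {lam m β E : ℝ}
    (hw : ∀ᵐ x ∂μ, 0 ≤ w x) (hv : ∀ᵐ x ∂μ, 0 < v x)
    (hlam : 0 < lam) (hm : 0 < m) (hβ : 1 < 2 * β)
    (hint_double : Integrable (fun x => w x * v x ^ (2 * β + m - 1)) μ)
    (hint_single : Integrable (fun x => w x * v x ^ (β + m - 1)) μ)
    (hint_sq : Integrable (fun x => w x * v x ^ (m - 1) * (v x ^ β - 1) ^ 2) μ)
    (hstable : lam * m * ∫ x, w x * v x ^ (m - 1) * (v x ^ β - 1) ^ 2 ∂μ ≤ β ^ 2 * E)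
    (hweak : (2 * β - 1) * E ≤ lam * ∫ x, w x * v x ^ (2 * β + m - 1) ∂μ) :
    (1 - β ^ 2 / (m * (2 * β - 1))) * ∫ x, w x * v x ^ (2 * β + m - 1) ∂μ ≤
      2 * ∫ x, w x * v x ^ (β + m - 1) ∂μ := by
  have hupper := le_div_mul_of_mul_le_mul hlam hm (sq_nonneg β) (sub_pos.2 hβ) hstable hweak
  simp only [add_sub_assoc] at hint_double hint_single hupper ⊢
  have hlower := integral_rpow_sub_two_mul_integral_rpow_le hw hv hint_double hint_single hint_sq
  linarith

end WeightedPowers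

theorem power_key_combination_step
    {Ω : Type*} [MeasurableSpace Ω] (μ : Measure Ω) [IsFiniteMeasure μ]
    (a G u : Ω → ℝ) (lam m b t : ℝ)
    (ha : Measurable a) (hbd : ∃ C, ∀ x, |a x| ≤ C)
    (hG : Measurable G) (hGnonneg : ∀ x, 0 ≤ G x)
    (hu : Measurable u) (hu0 : ∀ x, 0 ≤ u x)
    (hlam : 0 < lam) (hm : 1 < m) (hb : 0 < b) (ht : 0 < t) (hbt : 1 < 2*b*t)
    (hint1 : Integrable (fun x => exp (a x) * (1 + u x) ^ (2*b*t - 2) * G x) μ)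
    (hint2 : Integrable (fun x => exp (a x) * (1 + u x) ^ (2*b*t + m - 1)) μ)
    (hint3 : Integrable (fun x => exp (a x) * (1 + u x) ^ (b*t + m - 1)) μ)
    (hint4 : Integrable
      (fun x => exp (a x) * (1 + u x) ^ (m - 1) * ((1 + u x) ^ (b*t) - 1)^2) μ)
    (h1 : b^2*t^2 * ∫ x, exp (a x) * (1 + u x) ^ (2*b*t - 2) * G x ∂μ ≥
      lam * m * ∫ x, exp (a x) * (1 + u x) ^ (m - 1) * ((1 + u x) ^ (b*t) - 1)^2 ∂μ)
    (h2 : (2*b*t - 1) * ∫ x, exp (a x) * (1 + u x) ^ (2*b*t - 2) * G x ∂μ ≤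
      lam * ∫ x, exp (a x) * (1 + u x) ^ (2*b*t + m - 1) ∂μ) :
    (1 - b^2*t^2/(m*(2*b*t - 1))) * ∫ x, exp (a x) * (1 + u x) ^ (2*b*t + m - 1) ∂μ ≤
      2 * ∫ x, exp (a x) * (1 + u x) ^ (b*t + m - 1) ∂μ := by
  simp only [mul_assoc 2 b t, ← mul_pow] at hbt hint2 h1 h2 ⊢
  exact power_key_combination_step_general (.of_forall fun x => (exp_pos (a x)).le)
    (.of_forall fun x => add_pos_of_pos_of_nonneg one_pos (hu0 x))
    hlam (one_pos.trans hm) hbt hint2 hint3 hint4 h1 h2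
end

section
/- Let (Ω, μ) be a measure space with μ(Ω) < ∞, let a : Ω → ℝ be a bounded measurable function, G : Ω → ℝ a nonnegative measurable function, λ > 0, m > 1, b > 0 and t > 0 real numbers with m − √(m(m−1)) < bt < m + √(m(m−1)), and let u : Ω → ℝ be a nonnegative measurable function. Assume the functions e^a(1+u)^{2bt−2}G, e^a(1+u)^{2bt+m−1}, e^a(1+u)^{bt+m−1} and e^a(1+u)^{m−1}((1+u)^{bt}−1)² are μ-integrable. If (h1) b²t²∫_Ω e^a(1+u)^{2bt−2}G dμ ≥ λm∫_Ω e^a(1+u)^{m−1}((1+u)^{bt}−1)² dμ and (h2) (2bt−1)∫_Ω e^a(1+u)^{2bt−2}G dμ ≤ λ∫_Ω e^a(1+u)^{2bt+m−1} dμ, then ∫_Ω e^a(1+u)^{2bt+m−1} dμ ≤ [2m(2bt−1)/(m(2bt−1) − b²t²)]^{(2bt+m−1)/(bt)} ∫_Ω e^a dμ. -/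
open MeasureTheory Real

/-!
The two energy hypotheses bound the same quantity `∫ e^a (1+u)^{2bt-2} G` from below and from
above; eliminating it and expanding the square `((1+u)^{bt} - 1)²` gives
`∫ e^a (1+u)^{2bt+m-1} ≤ K ∫ e^a (1+u)^{bt+m-1}`, with a finite constant `K` exactly because
`b²t² < m(2bt-1)`. The left exponent is the larger one, so Young's inequality, which replaces
Hölder's and avoids dividing by the left-hand side, absorbs the right-hand side into the left at
the cost of a multiple of `∫ e^a`.
-/

theorem sq_lt_mul_two_mul_sub_one {m s : ℝ} (hm : 1 < m)
    (hs_lower : m - √(m * (m - 1)) < s) (hs_upper : s < m + √(m * (m - 1))) :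
    s ^ 2 < m * (2 * s - 1) := by
  have hsqrt : √(m * (m - 1)) ^ 2 = m * (m - 1) :=
    sq_sqrt (mul_nonneg (by linarith) (by linarith))
  have hdist : (s - m) ^ 2 < √(m * (m - 1)) ^ 2 :=
    sq_lt_sq' (by linarith) (by linarith)
  linarith

theorem one_lt_of_sq_lt_mul_two_mul_sub_one {m s : ℝ} (hm : 0 < m)
    (hs : s ^ 2 < m * (2 * s - 1)) : 1 < m := by
  have : 0 < m * (m - 1) := by linarith [sq_nonneg (s - m)]
  linarith [pos_of_mul_pos_right this hm.le]

theorem two_mul_sub_one_pos_of_sq_lt {m s : ℝ} (hm : 0 < m)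
    (hs : s ^ 2 < m * (2 * s - 1)) : 0 < 2 * s - 1 :=
  pos_of_mul_pos_right ((sq_nonneg s).trans_lt hs) hm.le

theorem rpow_le_one_add_rpow {x p q : ℝ} (hx : 0 ≤ x) (hq : 0 ≤ q) (hqp : q ≤ p) :
    x ^ q ≤ 1 + x ^ p := by
  rcases le_total x 1 with hx1 | hx1
  · linarith [rpow_le_one hx hx1 hq, rpow_nonneg hx p]
  · linarith [rpow_le_rpow_of_exponent_le hx1 hqp]

theorem rpow_mul_rpow_sub_one_sq_s5 {x r s : ℝ} (hx : 0 ≤ x) (hr : 0 ≤ r) (hs : 0 ≤ s) :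
    x ^ r * (x ^ s - 1) ^ 2 = x ^ (2 * s + r) - 2 * x ^ (s + r) + x ^ r := by
  rw [two_mul, rpow_add_of_nonneg hx (add_nonneg hs hs) hr, rpow_add_of_nonneg hx hs hs,
    rpow_add_of_nonneg hx hs hr]
  ring

theorem mul_rpow_le_add_rpow_of_lt {x K p q : ℝ} (hx : 0 ≤ x) (hK : 0 ≤ K)
    (hq : 0 < q) (hqp : q < p) :
    K * x ^ q ≤ q / p * x ^ p + (1 - q / p) * K ^ (p / (p - q)) := by
  have hp : 0 < p := hq.trans hqp
  have hconj : (p / q).HolderConjugate (p / (p - q)) :=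
    holderConjugate_iff.mpr ⟨(one_lt_div hq).mpr hqp, by
      field_simp
      ring⟩
  calc K * x ^ q = x ^ q * K := mul_comm _ _
    _ ≤ (x ^ q) ^ (p / q) / (p / q) + K ^ (p / (p - q)) / (p / (p - q)) :=
      young_inequality_of_nonneg (rpow_nonneg hx q) hK hconj
    _ = q / p * x ^ p + (1 - q / p) * K ^ (p / (p - q)) := by
      rw [← rpow_mul hx, mul_div_cancel₀ p hq.ne']
      field_simp

/-- `E` is an energy, `X` and `Y` stand for the integrals of the powers `2s + m - 1` and
`s + m - 1`, and `W` for that of the potential times the squared test function. -/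
theorem le_div_mul_of_energy_bounds {lam m s E W X Y : ℝ} (hlam : 0 < lam) (hm : 0 < m)
    (hs : s ^ 2 < m * (2 * s - 1))
    (hlower : lam * m * W ≤ s ^ 2 * E) (hupper : (2 * s - 1) * E ≤ lam * X)
    (hW : X - 2 * Y ≤ W) :
    X ≤ 2 * m * (2 * s - 1) / (m * (2 * s - 1) - s ^ 2) * Y := by
  have h2s : 0 < 2 * s - 1 := two_mul_sub_one_pos_of_sq_lt hm hs
  have hchain : lam * ((2 * s - 1) * m * (X - 2 * Y)) ≤ lam * (s ^ 2 * X) :=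
    calc lam * ((2 * s - 1) * m * (X - 2 * Y))
        ≤ lam * ((2 * s - 1) * m * W) := by gcongr
      _ = (2 * s - 1) * (lam * m * W) := by ring
      _ ≤ (2 * s - 1) * (s ^ 2 * E) := by gcongr
      _ = s ^ 2 * ((2 * s - 1) * E) := by ring
      _ ≤ s ^ 2 * (lam * X) := by gcongr
      _ = lam * (s ^ 2 * X) := by ring
  rw [div_mul_eq_mul_div, le_div_iff₀ (sub_pos.mpr hs)]
  linarith [le_of_mul_le_mul_left hchain hlam]

section WeightedIntegrals

variable {Ω : Type*} [MeasurableSpace Ω] {μ : Measure Ω} {ρ v : Ω → ℝ}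

theorem integrable_mul_rpow_of_le {p q : ℝ} (hρ : Integrable ρ μ) (hv0 : 0 ≤ᵐ[μ] v)
    (hv : AEMeasurable v μ) (hq : 0 ≤ q) (hqp : q ≤ p)
    (hp : Integrable (fun x => ρ x * v x ^ p) μ) :
    Integrable (fun x => ρ x * v x ^ q) μ := by
  refine (hρ.norm.add hp.norm).mono'
    (hρ.aestronglyMeasurable.mul (hv.pow_const q).aestronglyMeasurable) ?_
  filter_upwards [hv0] with x hvx
  calc ‖ρ x * v x ^ q‖ = ‖ρ x‖ * v x ^ q := by
        rw [norm_mul, norm_of_nonneg (rpow_nonneg hvx q)]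
    _ ≤ ‖ρ x‖ * (1 + v x ^ p) := by
        gcongr
        exact rpow_le_one_add_rpow hvx hq hqp
    _ = ‖ρ x‖ + ‖ρ x * v x ^ p‖ := by
        rw [norm_mul, norm_of_nonneg (rpow_nonneg hvx p), mul_one_add]

theorem integral_mul_rpow_le_of_le_mul_integral {K p q : ℝ} (hρ0 : 0 ≤ᵐ[μ] ρ)
    (hρ : Integrable ρ μ) (hv0 : 0 ≤ᵐ[μ] v) (hK : 0 ≤ K) (hq : 0 < q) (hqp : q < p)
    (hpint : Integrable (fun x => ρ x * v x ^ p) μ)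
    (hqint : Integrable (fun x => ρ x * v x ^ q) μ)
    (hle : ∫ x, ρ x * v x ^ p ∂μ ≤ K * ∫ x, ρ x * v x ^ q ∂μ) :
    ∫ x, ρ x * v x ^ p ∂μ ≤ K ^ (p / (p - q)) * ∫ x, ρ x ∂μ := by
  have hyoung : K * ∫ x, ρ x * v x ^ q ∂μ ≤
      q / p * ∫ x, ρ x * v x ^ p ∂μ + (1 - q / p) * K ^ (p / (p - q)) * ∫ x, ρ x ∂μ := by
    simp only [← integral_const_mul]
    rw [← integral_add (hpint.const_mul _) (hρ.const_mul _)]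
    refine integral_mono_ae (hqint.const_mul K)
      ((hpint.const_mul _).add (hρ.const_mul _)) ?_
    filter_upwards [hρ0, hv0] with x hρx hvx
    linarith [mul_le_mul_of_nonneg_left (mul_rpow_le_add_rpow_of_lt hvx hK hq hqp) hρx]
  have hfrac : 0 < 1 - q / p := sub_pos.mpr ((div_lt_one (hq.trans hqp)).mpr hqp)
  refine le_of_mul_le_mul_left ?_ hfrac
  linarith [hle.trans hyoung]

theorem integral_mul_rpow_sub_two_mul_le {r s : ℝ} (hρ0 : 0 ≤ᵐ[μ] ρ) (hρ : Integrable ρ μ)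
    (hv0 : 0 ≤ᵐ[μ] v) (hv : AEMeasurable v μ) (hr : 0 ≤ r) (hs : 0 ≤ s)
    (hint : Integrable (fun x => ρ x * v x ^ (2 * s + r)) μ) :
    ∫ x, ρ x * v x ^ (2 * s + r) ∂μ - 2 * ∫ x, ρ x * v x ^ (s + r) ∂μ ≤
      ∫ x, ρ x * v x ^ r * (v x ^ s - 1) ^ 2 ∂μ := by
  have hmid : Integrable (fun x => ρ x * v x ^ (s + r)) μ :=
    integrable_mul_rpow_of_le hρ hv0 hv (by linarith) (by linarith) hint
  have hlow : Integrable (fun x => ρ x * v x ^ r) μ :=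
    integrable_mul_rpow_of_le hρ hv0 hv hr (by linarith) hint
  have hexpand : ∫ x, ρ x * v x ^ r * (v x ^ s - 1) ^ 2 ∂μ =
      ∫ x, ρ x * v x ^ (2 * s + r) ∂μ - 2 * ∫ x, ρ x * v x ^ (s + r) ∂μ
        + ∫ x, ρ x * v x ^ r ∂μ := by
    rw [← integral_const_mul, ← integral_sub hint (hmid.const_mul 2),
      ← integral_add (by exact hint.sub (hmid.const_mul 2)) hlow]
    refine integral_congr_ae ?_
    filter_upwards [hv0] with x hvx
    linear_combination ρ x * rpow_mul_rpow_sub_one_sq_s5 hvx hr hs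
  have hnonneg : 0 ≤ ∫ x, ρ x * v x ^ r ∂μ := by
    refine integral_nonneg_of_ae ?_
    filter_upwards [hρ0, hv0] with x hρx hvx using mul_nonneg hρx (rpow_nonneg hvx r)
  linarith

/-- `ρ`, `v`, `s` and `E` play the roles of `e^a`, `1 + u`, `bt` and
`∫ e^a (1 + u)^{2bt - 2} G`. -/
theorem power_uniform_Lp_estimate_general {lam m s E : ℝ}
    (hρ0 : 0 ≤ᵐ[μ] ρ) (hρ : Integrable ρ μ) (hv0 : 0 ≤ᵐ[μ] v) (hv : AEMeasurable v μ)
    (hlam : 0 < lam) (hm : 0 < m) (hs : s ^ 2 < m * (2 * s - 1))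
    (hint : Integrable (fun x => ρ x * v x ^ (2 * s + m - 1)) μ)
    (hlower : lam * m * ∫ x, ρ x * v x ^ (m - 1) * (v x ^ s - 1) ^ 2 ∂μ ≤ s ^ 2 * E)
    (hupper : (2 * s - 1) * E ≤ lam * ∫ x, ρ x * v x ^ (2 * s + m - 1) ∂μ) :
    ∫ x, ρ x * v x ^ (2 * s + m - 1) ∂μ ≤
      (2 * m * (2 * s - 1) / (m * (2 * s - 1) - s ^ 2)) ^ ((2 * s + m - 1) / s) *
        ∫ x, ρ x ∂μ := by
  have hm1 : 1 < m := one_lt_of_sq_lt_mul_two_mul_sub_one hm hs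
  have h2s : 0 < 2 * s - 1 := two_mul_sub_one_pos_of_sq_lt hm hs
  have hK : 0 ≤ 2 * m * (2 * s - 1) / (m * (2 * s - 1) - s ^ 2) :=
    div_nonneg (by positivity) (sub_pos.mpr hs).le
  have hgap : 2 * s + (m - 1) - (s + (m - 1)) = s := by ring
  simp only [add_sub_assoc] at hint hupper ⊢
  have hmid : Integrable (fun x => ρ x * v x ^ (s + (m - 1))) μ :=
    integrable_mul_rpow_of_le hρ hv0 hv (by linarith) (by linarith) hint
  have hreverse : ∫ x, ρ x * v x ^ (2 * s + (m - 1)) ∂μ ≤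
      2 * m * (2 * s - 1) / (m * (2 * s - 1) - s ^ 2) * ∫ x, ρ x * v x ^ (s + (m - 1)) ∂μ :=
    le_div_mul_of_energy_bounds hlam hm hs hlower hupper
      (integral_mul_rpow_sub_two_mul_le hρ0 hρ hv0 hv (by linarith) (by linarith) hint)
  simpa only [hgap] using integral_mul_rpow_le_of_le_mul_integral hρ0 hρ hv0 hK
    (by linarith) (by linarith) hint hmid hreverse

end WeightedIntegrals

theorem integrable_exp_of_ae_le {Ω : Type*} [MeasurableSpace Ω] {μ : Measure Ω}
    [IsFiniteMeasure μ] {a : Ω → ℝ} {C : ℝ} (ha : AEMeasurable a μ) (hC : ∀ᵐ x ∂μ, a x ≤ C) :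
    Integrable (fun x => exp (a x)) μ := by
  refine Integrable.of_bound ha.exp.aestronglyMeasurable (exp C) ?_
  filter_upwards [hC] with x hx
  simpa only [norm_of_nonneg (exp_nonneg _), exp_le_exp] using hx

theorem power_uniform_Lp_estimate
    {Ω : Type*} [MeasurableSpace Ω] (μ : Measure Ω) [IsFiniteMeasure μ]
    (a G u : Ω → ℝ) (lam m b t : ℝ)
    (ha : Measurable a) (hbd : ∃ C, ∀ x, |a x| ≤ C)
    (hG : Measurable G) (hGnonneg : ∀ x, 0 ≤ G x)
    (hu : Measurable u) (hu0 : ∀ x, 0 ≤ u x)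
    (hlam : 0 < lam) (hm : 1 < m) (hb : 0 < b) (ht : 0 < t)
    (hbt1 : m - Real.sqrt (m*(m-1)) < b*t) (hbt2 : b*t < m + Real.sqrt (m*(m-1)))
    (hint1 : Integrable (fun x => exp (a x) * (1 + u x) ^ (2*b*t - 2) * G x) μ)
    (hint2 : Integrable (fun x => exp (a x) * (1 + u x) ^ (2*b*t + m - 1)) μ)
    (hint3 : Integrable (fun x => exp (a x) * (1 + u x) ^ (b*t + m - 1)) μ)
    (hint4 : Integrable
      (fun x => exp (a x) * (1 + u x) ^ (m - 1) * ((1 + u x) ^ (b*t) - 1)^2) μ)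
    (h1 : b^2*t^2 * ∫ x, exp (a x) * (1 + u x) ^ (2*b*t - 2) * G x ∂μ ≥
      lam * m * ∫ x, exp (a x) * (1 + u x) ^ (m - 1) * ((1 + u x) ^ (b*t) - 1)^2 ∂μ)
    (h2 : (2*b*t - 1) * ∫ x, exp (a x) * (1 + u x) ^ (2*b*t - 2) * G x ∂μ ≤
      lam * ∫ x, exp (a x) * (1 + u x) ^ (2*b*t + m - 1) ∂μ) :
    ∫ x, exp (a x) * (1 + u x) ^ (2*b*t + m - 1) ∂μ ≤
      (2*m*(2*b*t - 1)/(m*(2*b*t - 1) - b^2*t^2)) ^ ((2*b*t + m - 1)/(b*t)) *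
        ∫ x, exp (a x) ∂μ := by
  obtain ⟨C, hC⟩ := hbd
  have hexp : Integrable (fun x => exp (a x)) μ :=
    integrable_exp_of_ae_le ha.aemeasurable (.of_forall fun x => (le_abs_self _).trans (hC x))
  have hs : (b * t) ^ 2 < m * (2 * (b * t) - 1) := sq_lt_mul_two_mul_sub_one hm hbt1 hbt2
  simp only [mul_assoc 2 b t, ← mul_pow] at hint2 h1 h2 ⊢
  exact power_uniform_Lp_estimate_general (.of_forall fun x => (exp_pos _).le) hexp
    (.of_forall fun x => add_nonneg zero_le_one (hu0 x)) (hu.const_add 1).aemeasurable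
    hlam (one_pos.trans hm) hs hint2 h1 h2
end

section
/- Let N ≥ 1 be an integer, R > 0, let a : [0,R] → ℝ be continuous and ψ : [0,R] → ℝ be continuous, nonnegative, and strictly positive on (0,R), and write w(r) = e^{a(r)}ψ(r)^{N−1}. Let λ > 0 and let u : [0,R] → ℝ be continuously differentiable with u ≥ 0 and u'(r) ≤ 0 for all r, and assume that for every r ∈ (0,R), e^{a(r)}ψ(r)^{N−1}u'(r) = −λ∫₀^r w(s)e^{u(s)} ds. Then for every p > 1 and every r ∈ (0,R): u(0) ≥ u(r), and there exists c ∈ (0,r) such that u(0) − u(r) ≤ λ r e^{−a(c)}ψ(c)^{1−N} (∫₀^R w(s)e^{p u(s)} ds)^{1/p} (∫₀^R w(s) ds)^{(p−1)/p}. -/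
open MeasureTheory Real intervalIntegral

/-!
The mean value theorem turns the oscillation `u 0 - u r` into `-r * u' c`, and dividing the
integrated equation at `c` by the weight `w c` turns this into `lam * r / w c` times the integral
of `w * exp u` over `(0, c)`. The integrand is nonnegative, so the integral grows when `(0, c)` is
enlarged to `(0, R)`, where Hölder's inequality for the measure with density `w`, applied to the
product of `exp u` and `1`, gives the bound.
-/

section Holder

variable {α : Type*} [MeasurableSpace α] {μ : Measure α} {f w : α → ℝ} {p q : ℝ}

theorem memLp_ofReal_of_integrable_rpow (hp : 0 < p) (hf : AEStronglyMeasurable f μ)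
    (hf_nonneg : 0 ≤ᵐ[μ] f) (hfp : Integrable (fun x => f x ^ p) μ) :
    MemLp f (ENNReal.ofReal p) μ := by
  rw [← integrable_norm_rpow_iff hf (ENNReal.ofReal_pos.2 hp).ne' ENNReal.ofReal_ne_top,
    ENNReal.toReal_ofReal hp.le]
  refine hfp.congr ?_
  filter_upwards [hf_nonneg] with x hx
  rw [Real.norm_of_nonneg hx]

theorem integral_mul_le_weighted_Lp_mul_rpow_integral (hpq : p.HolderConjugate q)
    (hw_nonneg : 0 ≤ᵐ[μ] w) (hf_nonneg : 0 ≤ᵐ[μ] f) (hw : Integrable w μ)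
    (hf : AEStronglyMeasurable f μ) (hwf : Integrable (fun x => w x * f x ^ p) μ) :
    ∫ x, w x * f x ∂μ ≤ (∫ x, w x * f x ^ p ∂μ) ^ (1 / p) * (∫ x, w x ∂μ) ^ (1 / q) := by
  have measurable_rpow (y : ℝ) : AEStronglyMeasurable (fun x => w x ^ y) μ :=
    (hw.aemeasurable.pow_const y).aestronglyMeasurable
  have rpow_p : (fun x => (w x ^ p⁻¹ * f x) ^ p) =ᵐ[μ] fun x => w x * f x ^ p := by
    filter_upwards [hw_nonneg, hf_nonneg] with x hwx hfx
    rw [Real.mul_rpow (Real.rpow_nonneg hwx _) hfx, Real.rpow_inv_rpow hwx hpq.ne_zero]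
  have rpow_q : (fun x => (w x ^ q⁻¹) ^ q) =ᵐ[μ] w := by
    filter_upwards [hw_nonneg] with x hwx
    exact Real.rpow_inv_rpow hwx hpq.symm.ne_zero
  have split_weight : (fun x => w x * f x) =ᵐ[μ] fun x => (w x ^ p⁻¹ * f x) * w x ^ q⁻¹ := by
    filter_upwards [hw_nonneg] with x hwx
    rw [mul_right_comm, ← Real.rpow_add_of_nonneg hwx hpq.inv_nonneg hpq.symm.inv_nonneg,
      hpq.inv_add_inv_eq_one, Real.rpow_one]
  have left_nonneg : 0 ≤ᵐ[μ] fun x => w x ^ p⁻¹ * f x := by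
    filter_upwards [hw_nonneg, hf_nonneg] with x hwx hfx
    exact mul_nonneg (Real.rpow_nonneg hwx _) hfx
  have right_nonneg : 0 ≤ᵐ[μ] fun x => w x ^ q⁻¹ := by
    filter_upwards [hw_nonneg] with x hwx
    exact Real.rpow_nonneg hwx _
  rw [integral_congr_ae split_weight, ← integral_congr_ae rpow_p, ← integral_congr_ae rpow_q]
  exact integral_mul_le_Lp_mul_Lq_of_nonneg hpq left_nonneg right_nonneg
    (memLp_ofReal_of_integrable_rpow hpq.pos ((measurable_rpow _).mul hf) left_nonneg
      (hwf.congr rpow_p.symm))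
    (memLp_ofReal_of_integrable_rpow hpq.symm.pos (measurable_rpow _) right_nonneg
      (hw.congr rpow_q.symm))

end Holder

section Interval

variable {w g u F : ℝ → ℝ} {x y z p lam : ℝ}

theorem intervalIntegral_mul_le_weighted_Lp_mul_rpow_integral (hp : 1 ≤ p) (hxy : x ≤ y)
    (hw : IntervalIntegrable w volume x y) (hw_nonneg : ∀ s ∈ Set.Ioo x y, 0 ≤ w s)
    (hg : ContinuousOn g (Set.Icc x y)) (hg_nonneg : ∀ s ∈ Set.Ioo x y, 0 ≤ g s) :
    ∫ s in x..y, w s * g s ≤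
      (∫ s in x..y, w s * g s ^ p) ^ (1 / p) * (∫ s in x..y, w s) ^ ((p - 1) / p) := by
  obtain rfl | hp := hp.eq_or_lt
  · simp
  have hpq : p.HolderConjugate p.conjExponent := .conjExponent hp
  have hwgp : IntervalIntegrable (fun s => w s * g s ^ p) volume x y := by
    refine hw.mul_continuousOn ?_
    rw [Set.uIcc_of_le hxy]
    exact hg.rpow_const fun _ _ => .inr hpq.nonneg
  rw [← one_div_div p (p - 1)]
  simp only [intervalIntegral.integral_of_le hxy, integral_Ioc_eq_integral_Ioo]
  exact integral_mul_le_weighted_Lp_mul_rpow_integral hpq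
    (ae_restrict_of_forall_mem measurableSet_Ioo hw_nonneg)
    (ae_restrict_of_forall_mem measurableSet_Ioo hg_nonneg)
    ((intervalIntegrable_iff_integrableOn_Ioo_of_le hxy).1 hw)
    ((hg.mono Set.Ioo_subset_Icc_self).aestronglyMeasurable measurableSet_Ioo)
    ((intervalIntegrable_iff_integrableOn_Ioo_of_le hxy).1 hwgp)

theorem exists_sub_eq_mul_div_of_mul_deriv_eq_neg (hxy : x < y)
    (hu : ContinuousOn u (Set.Icc x y)) (hu' : DifferentiableOn ℝ u (Set.Ioo x y))
    (hw : ∀ s ∈ Set.Ioo x y, w s ≠ 0) (hF : ∀ s ∈ Set.Ioo x y, w s * deriv u s = -F s) :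
    ∃ c ∈ Set.Ioo x y, u x - u y = (y - x) * (F c / w c) := by
  obtain ⟨c, hc, hslope⟩ := exists_deriv_eq_slope u hxy hu hu'
  have hderiv : deriv u c = -(F c / w c) := by
    rw [← neg_div, ← hF c hc, mul_div_cancel_left₀ _ (hw c hc)]
  refine ⟨c, hc, ?_⟩
  rw [← neg_eq_iff_eq_neg.2 hderiv, hslope, mul_neg, mul_div_cancel₀ _ (sub_pos.2 hxy).ne',
    neg_sub]

theorem le_and_exists_sub_le_of_mul_deriv_eq_neg_integral (hp : 1 ≤ p) (hlam : 0 ≤ lam)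
    (hxy : x < y) (hyz : y ≤ z)
    (hw : IntervalIntegrable w volume x z) (hw_pos : ∀ s ∈ Set.Ioo x z, 0 < w s)
    (hg : ContinuousOn g (Set.Icc x z)) (hg_nonneg : ∀ s ∈ Set.Ioo x z, 0 ≤ g s)
    (hu : ContinuousOn u (Set.Icc x y)) (hu' : DifferentiableOn ℝ u (Set.Ioo x y))
    (heq : ∀ r ∈ Set.Ioo x y, w r * deriv u r = -(lam * ∫ s in x..r, w s * g s)) :
    u y ≤ u x ∧ ∃ c ∈ Set.Ioo x y,
      u x - u y ≤ lam * (y - x) * (w c)⁻¹ *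
        ((∫ s in x..z, w s * g s ^ p) ^ (1 / p) * (∫ s in x..z, w s) ^ ((p - 1) / p)) := by
  have hxz : x ≤ z := hxy.le.trans hyz
  have hIoo : Set.Ioo x y ⊆ Set.Ioo x z := Set.Ioo_subset_Ioo_right hyz
  obtain ⟨c, hc, hosc⟩ := exists_sub_eq_mul_div_of_mul_deriv_eq_neg hxy hu hu'
    (fun s hs => (hw_pos s (hIoo hs)).ne') heq
  have hcz : c ≤ z := (hIoo hc).2.le
  have hwg : IntervalIntegrable (fun s => w s * g s) volume x z :=
    hw.mul_continuousOn (by rwa [Set.uIcc_of_le hxz])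
  have hwg_nonneg : ∀ s ∈ Set.Ioo x z, 0 ≤ w s * g s := fun s hs =>
    mul_nonneg (hw_pos s hs).le (hg_nonneg s hs)
  have integral_le : ∫ s in x..c, w s * g s ≤ ∫ s in x..z, w s * g s := by
    refine intervalIntegral.integral_mono_interval le_rfl hc.1.le hcz ?_ hwg
    rw [← restrict_Ioo_eq_restrict_Ioc]
    exact ae_restrict_of_forall_mem measurableSet_Ioo hwg_nonneg
  have integral_nonneg : 0 ≤ ∫ s in x..c, w s * g s := by
    rw [intervalIntegral.integral_of_le hc.1.le, integral_Ioc_eq_integral_Ioo]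
    exact setIntegral_nonneg measurableSet_Ioo fun s hs => hwg_nonneg s ⟨hs.1, hs.2.trans_le hcz⟩
  have hosc' : u x - u y = lam * (y - x) * (w c)⁻¹ * ∫ s in x..c, w s * g s := by
    rw [hosc]
    ring
  have coeff_nonneg : 0 ≤ lam * (y - x) * (w c)⁻¹ :=
    mul_nonneg (mul_nonneg hlam (sub_pos.2 hxy).le) (inv_nonneg.2 (hw_pos c (hIoo hc)).le)
  refine ⟨sub_nonneg.1 (hosc' ▸ mul_nonneg coeff_nonneg integral_nonneg), c, hc, ?_⟩
  rw [hosc']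
  gcongr
  exact integral_le.trans <| intervalIntegral_mul_le_weighted_Lp_mul_rpow_integral hp hxz hw
    (fun s hs => (hw_pos s hs).le) hg hg_nonneg

end Interval

theorem inv_exp_mul_pow_sub_one {N : ℕ} (hN : 1 ≤ N) (x y : ℝ) :
    (exp x * y ^ (N - 1))⁻¹ = exp (-x) * y ^ ((1 : ℤ) - (N : ℤ)) := by
  rw [mul_inv, exp_neg, ← zpow_natCast, ← zpow_neg, Nat.cast_sub hN, Nat.cast_one, neg_sub]

theorem radial_gelfand_oscillation_bound_general
    {N : ℕ} (hN : 1 ≤ N) {R : ℝ} {a ψ w u : ℝ → ℝ}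
    (hψ : ∀ r ∈ Set.Ioo 0 R, 0 < ψ r)
    (hw : ∀ r, w r = exp (a r) * ψ r ^ (N - 1)) (hwint : IntervalIntegrable w volume 0 R)
    {lam : ℝ} (hlam : 0 ≤ lam)
    (hu : ContinuousOn u (Set.Icc 0 R)) (hu' : DifferentiableOn ℝ u (Set.Ioo 0 R))
    (heq : ∀ r ∈ Set.Ioo 0 R,
      exp (a r) * ψ r ^ (N - 1) * deriv u r = -lam * ∫ s in 0..r, w s * exp (u s))
    {p : ℝ} (hp : 1 ≤ p) {r : ℝ} (hr : r ∈ Set.Ioo 0 R) :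
    u r ≤ u 0 ∧ ∃ c ∈ Set.Ioo 0 r,
      u 0 - u r ≤ lam * r * exp (-(a c)) * ψ c ^ ((1 : ℤ) - (N : ℤ)) *
        (∫ s in 0..R, w s * exp (p * u s)) ^ (1 / p) *
        (∫ s in 0..R, w s) ^ ((p - 1) / p) := by
  have hw_pos : ∀ s ∈ Set.Ioo 0 R, 0 < w s := fun s hs =>
    hw s ▸ mul_pos (exp_pos _) (pow_pos (hψ s hs) _)
  have hIoo : Set.Ioo 0 r ⊆ Set.Ioo 0 R := Set.Ioo_subset_Ioo_right hr.2.le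
  obtain ⟨hle, c, hc, hbound⟩ := le_and_exists_sub_le_of_mul_deriv_eq_neg_integral hp hlam
    hr.1 hr.2.le hwint hw_pos hu.rexp (fun s _ => (exp_pos (u s)).le)
    (hu.mono (Set.Icc_subset_Icc_right hr.2.le)) (hu'.mono hIoo)
    (fun s hs => by rw [hw s, heq s (hIoo hs), neg_mul])
  refine ⟨hle, c, hc, ?_⟩
  simpa only [sub_zero, hw c, inv_exp_mul_pow_sub_one hN, ← exp_mul, mul_comm (u _) p,
    ← mul_assoc] using hbound

theorem radial_gelfand_oscillation_bound
    (N : ℕ) (hN : 1 ≤ N) (R : ℝ) (hR : 0 < R)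
    (a ψ : ℝ → ℝ) (ha : ContinuousOn a (Set.Icc 0 R))
    (hψ : ContinuousOn ψ (Set.Icc 0 R)) (hψ0 : ∀ r ∈ Set.Icc (0:ℝ) R, 0 ≤ ψ r)
    (hψpos : ∀ r ∈ Set.Ioo (0:ℝ) R, 0 < ψ r)
    (w : ℝ → ℝ) (hw : ∀ r, w r = exp (a r) * ψ r ^ (N - 1))
    (lam : ℝ) (hlam : 0 < lam)
    (u : ℝ → ℝ) (hu : ContDiff ℝ 1 u)
    (hu0 : ∀ r ∈ Set.Icc (0:ℝ) R, 0 ≤ u r)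
    (hu' : ∀ r ∈ Set.Icc (0:ℝ) R, deriv u r ≤ 0)
    (heq : ∀ r ∈ Set.Ioo (0:ℝ) R,
      exp (a r) * ψ r ^ (N - 1) * deriv u r =
        -lam * ∫ s in (0:ℝ)..r, w s * exp (u s)) :
    ∀ p : ℝ, 1 < p → ∀ r ∈ Set.Ioo (0:ℝ) R,
      u r ≤ u 0 ∧ ∃ c ∈ Set.Ioo (0:ℝ) r,
        u 0 - u r ≤ lam * r * exp (-(a c)) * ψ c ^ ((1:ℤ) - (N:ℤ)) *
          (∫ s in (0:ℝ)..R, w s * exp (p * u s)) ^ (1/p) *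
          (∫ s in (0:ℝ)..R, w s) ^ ((p-1)/p) := by
  have hwc : ContinuousOn w (Set.Icc 0 R) := (ha.rexp.mul (hψ.pow _)).congr fun s _ => hw s
  have hud : Differentiable ℝ u := hu.differentiable one_ne_zero
  exact fun p hp r hr => radial_gelfand_oscillation_bound_general hN hψpos hw
    (hwc.intervalIntegrable_of_Icc hR.le) hlam.le hud.continuous.continuousOn
    hud.differentiableOn heq hp.le hr
end

section
/- Let N ≥ 1 be an integer, R > 0, let a, ψ : [0,R] → ℝ be continuous with ψ ≥ 0, and write w(r) = e^{a(r)}ψ(r)^{N−1}. Let λ > 0, 0 < t < 2 + √6, and let u : [0,R] → ℝ be continuously differentiable with 0 ≤ u(r) < 1 for every r ∈ [0,R], u(R) = 0, and u nonincreasing on [0,R]. Assume the semistability condition (for every C¹ function ξ with ξ(R) = 0, ∫₀^R w(ξ')² dr ≥ 2λ∫₀^R w(1−u)^{−3}ξ² dr) and the weak-solution condition (for every C¹ function φ with φ(R) = 0, ∫₀^R w u'φ' dr = λ∫₀^R w(1−u)^{−2}φ dr), and suppose there is K ≥ 0 such that u(0) − u(r) ≤ K r for all r ∈ [0,R]. Then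 ∫₀^R w(r)(1 − u(0) + K r)^{−(2t+3)} dr ≤ [4(2t+1)/(2+4t−t²)]^{(2t+3)/t} ∫₀^R w(r) dr. -/
open MeasureTheory Real intervalIntegral

/-!
Test the equation with `(1 - u) ^ (-(2 * t + 1)) - 1` and the semistability inequality with
`(1 - u) ^ (-t) - 1`. Both produce the gradient term `∫ w (1 - u) ^ (-(2 * t + 2)) u'²`;
eliminating it bounds `∫ w (1 - u) ^ (-(2 * t + p + 1))` by a multiple of the lower-order integral
`∫ w (1 - u) ^ (-(t + p + 1))`, as long as `t² < p (2 * t + 1)`. Young's inequality absorbs the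
latter into the left-hand side. The oscillation bound says that the barrier `1 - u 0 + K r`
lies above `1 - u r`, so its negative powers are smaller.
-/

open Set Topology

section Young

theorem mul_rpow_le_div_mul_rpow_add {α β C x : ℝ} (hα : 0 ≤ α) (hαβ : α < β) (hC : 0 ≤ C)
    (hx : 0 ≤ x) :
    C * x ^ α ≤ α / β * x ^ β + (1 - α / β) * C ^ (β / (β - α)) := by
  have hβ : 0 < β := hα.trans_lt hαβ
  have hβα : β - α ≠ 0 := (sub_pos.2 hαβ).ne'
  have young := geom_mean_le_arith_mean2_weighted (p₁ := x ^ β) (p₂ := C ^ (β / (β - α)))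
    (div_nonneg hα hβ.le) (sub_nonneg.2 ((div_le_one hβ).2 hαβ.le))
    (rpow_nonneg hx _) (rpow_nonneg hC _) (add_sub_cancel _ _)
  have x_exponent : β * (α / β) = α := by field_simp
  have C_exponent : β / (β - α) * (1 - α / β) = 1 := by field_simp
  rwa [← rpow_mul hx, ← rpow_mul hC, x_exponent, C_exponent, rpow_one, mul_comm] at young

theorem integral_mul_rpow_le_of_le_mul_integral_s12 {Ω : Type*} [MeasurableSpace Ω] {μ : Measure Ω}
    {w f : Ω → ℝ} {α β C : ℝ} (hα : 0 ≤ α) (hαβ : α < β) (hC : 0 ≤ C)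
    (hw₀ : 0 ≤ᵐ[μ] w) (hf₀ : 0 ≤ᵐ[μ] f) (hw : Integrable w μ)
    (hwα : Integrable (fun x => w x * f x ^ α) μ) (hwβ : Integrable (fun x => w x * f x ^ β) μ)
    (h : ∫ x, w x * f x ^ β ∂μ ≤ C * ∫ x, w x * f x ^ α ∂μ) :
    ∫ x, w x * f x ^ β ∂μ ≤ C ^ (β / (β - α)) * ∫ x, w x ∂μ := by
  have young : C * ∫ x, w x * f x ^ α ∂μ ≤
      α / β * (∫ x, w x * f x ^ β ∂μ) + (1 - α / β) * C ^ (β / (β - α)) * ∫ x, w x ∂μ := by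
    simp only [← MeasureTheory.integral_const_mul]
    rw [← integral_add (hwβ.const_mul _) (hw.const_mul _)]
    refine integral_mono_ae (hwα.const_mul _) ((hwβ.const_mul _).add (hw.const_mul _)) ?_
    filter_upwards [hw₀, hf₀] with x hwx hfx
    linear_combination mul_le_mul_of_nonneg_left (mul_rpow_le_div_mul_rpow_add hα hαβ hC hfx) hwx
  have hcoef : 0 < 1 - α / β := sub_pos.2 ((div_lt_one (hα.trans_lt hαβ)).2 hαβ)
  refine le_of_mul_le_mul_left ?_ hcoef
  linarith

end Young

section TestFunctions

theorem exists_contDiff_pos_eq_of_le {δ : ℝ} (hδ : 0 < δ) (n : ℕ∞) :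
    ∃ m : ℝ → ℝ, ContDiff ℝ n m ∧ (∀ x, 0 < m x) ∧ ∀ x, δ ≤ x → m x = x := by
  refine ⟨fun x => δ / 2 + (x - δ / 2) * smoothTransition ((x - δ / 2) / (δ / 2)), ?_,
    fun x => ?_, fun x hx => ?_⟩
  · have hshift : ContDiff ℝ n fun x : ℝ => x - δ / 2 := by fun_prop
    exact contDiff_const.add
      (hshift.mul (smoothTransition.contDiff.comp (hshift.div_const (δ / 2))))
  · rcases le_total x (δ / 2) with h | h
    · have hzero : smoothTransition ((x - δ / 2) / (δ / 2)) = 0 :=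
        smoothTransition.zero_of_nonpos
          (div_nonpos_of_nonpos_of_nonneg (sub_nonpos.2 h) (half_pos hδ).le)
      simpa only [hzero, mul_zero, add_zero] using half_pos hδ
    · have := mul_nonneg (sub_nonneg.2 h) (smoothTransition.nonneg ((x - δ / 2) / (δ / 2)))
      linarith
  · have hone : smoothTransition ((x - δ / 2) / (δ / 2)) = 1 :=
      smoothTransition.one_of_one_le (by rw [le_div_iff₀ (half_pos hδ)]; linarith)
    simp only [hone, mul_one, add_sub_cancel]

theorem exists_contDiff_pos_eventuallyEq_nhdsSet {E : Type*} [NormedAddCommGroup E]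
    [NormedSpace ℝ E] {n : ℕ∞} {f : E → ℝ} {s : Set E} (hf : ContDiff ℝ n f) (hs : IsCompact s)
    (hpos : ∀ x ∈ s, 0 < f x) :
    ∃ g : E → ℝ, ContDiff ℝ n g ∧ (∀ x, 0 < g x) ∧ g =ᶠ[𝓝ˢ s] f := by
  obtain ⟨δ, hδ, hδf⟩ : ∃ δ, 0 < δ ∧ ∀ x ∈ s, δ ≤ f x :=
    hs.exists_forall_le' hf.continuous.continuousOn hpos
  obtain ⟨m, hm, hm_pos, hm_eq⟩ := exists_contDiff_pos_eq_of_le (half_pos hδ) n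
  refine ⟨m ∘ f, hm.comp hf, fun x => hm_pos _, ?_⟩
  have hnear : {x | δ / 2 < f x} ∈ 𝓝ˢ s :=
    (isOpen_lt continuous_const hf.continuous).mem_nhdsSet.2 fun x hx =>
      (half_lt_self hδ).trans_le (hδf x hx)
  filter_upwards [hnear] with x hx using hm_eq _ (le_of_lt hx)

theorem exists_contDiff_eq_one_sub_rpow_sub_one {u : ℝ → ℝ} {s : Set ℝ} (hu : ContDiff ℝ 1 u)
    (hs : IsCompact s) (hu1 : ∀ r ∈ s, u r < 1) (q : ℝ) :
    ∃ φ : ℝ → ℝ, ContDiff ℝ 1 φ ∧ ∀ r ∈ s, φ r = (1 - u r) ^ (-q) - 1 ∧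
      deriv φ r = q * (1 - u r) ^ (-(q + 1)) * deriv u r := by
  obtain ⟨g, hg, hg_pos, hg_eq⟩ := exists_contDiff_pos_eventuallyEq_nhdsSet (n := 1)
    (contDiff_const.sub hu) hs fun r hr => sub_pos.2 (hu1 r hr)
  refine ⟨fun r => g r ^ (-q) - 1,
    (hg.rpow_const_of_ne fun r => (hg_pos r).ne').sub contDiff_const, fun r hr => ?_⟩
  have hφ : (fun r => g r ^ (-q) - 1) =ᶠ[𝓝 r] fun r => (1 - u r) ^ (-q) - 1 :=
    (hg_eq.filter_mono (nhds_le_nhdsSet hr)).mono fun x hx => by simp only [hx]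
  have hderiv : HasDerivAt (fun r => (1 - u r) ^ (-q) - 1)
      (-deriv u r * -q * (1 - u r) ^ (-q - 1)) r :=
    (((hu.differentiable one_ne_zero r).hasDerivAt.const_sub 1).rpow_const
      (Or.inl (sub_pos.2 (hu1 r hr)).ne')).sub_const 1
  refine ⟨hφ.eq_of_nhds, ?_⟩
  rw [hφ.deriv_eq, hderiv.deriv, neg_add']
  ring

end TestFunctions

theorem intervalIntegrable_mul_rpow {w f : ℝ → ℝ} {a b : ℝ} (hw : IntervalIntegrable w volume a b)
    (hf : ContinuousOn f (uIcc a b)) (hf₀ : ∀ r ∈ uIcc a b, f r ≠ 0) (q : ℝ) :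
    IntervalIntegrable (fun r => w r * f r ^ q) volume a b :=
  hw.mul_continuousOn (hf.rpow_const fun r hr => Or.inl (hf₀ r hr))

/-- `u` solves `-(w u')' = lam * w * (1 - u) ^ (-p)` on `(0, R)` weakly, against `C¹` test functions
vanishing at `R`; the Neumann condition at `0` is encoded by leaving the test functions free there.
The Dirichlet condition `u R = 0` is not part of the definition. -/
def IsWeakRadialSolution (w : ℝ → ℝ) (R lam p : ℝ) (u : ℝ → ℝ) : Prop :=
  ∀ φ : ℝ → ℝ, ContDiff ℝ 1 φ → φ R = 0 →
    ∫ r in 0..R, w r * deriv u r * deriv φ r =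
      lam * ∫ r in 0..R, w r * (1 - u r) ^ (-p) * φ r

/-- Radial semistability of `u` for the nonlinearity `lam * (1 - u) ^ (-p)`: the second variation of
the energy is nonnegative on `C¹` functions vanishing at `R`. -/
def IsRadiallySemistable (w : ℝ → ℝ) (R lam p : ℝ) (u : ℝ → ℝ) : Prop :=
  ∀ ξ : ℝ → ℝ, ContDiff ℝ 1 ξ → ξ R = 0 →
    p * lam * ∫ r in 0..R, w r * (1 - u r) ^ (-(p + 1)) * ξ r ^ 2 ≤
      ∫ r in 0..R, w r * deriv ξ r ^ 2

section Estimates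

variable {w u : ℝ → ℝ} {R lam p t : ℝ}

theorem intervalIntegrable_mul_one_sub_rpow (hR : 0 ≤ R) (hw : IntervalIntegrable w volume 0 R)
    (hu : ContinuousOn u (Icc 0 R)) (hu1 : ∀ r ∈ Icc 0 R, u r < 1) (q : ℝ) :
    IntervalIntegrable (fun r => w r * (1 - u r) ^ q) volume 0 R := by
  rw [← uIcc_of_le hR] at hu hu1
  exact intervalIntegrable_mul_rpow hw (continuousOn_const.sub hu)
    (fun r hr => (sub_pos.2 (hu1 r hr)).ne') q

theorem integral_mul_one_sub_rpow_nonneg (hR : 0 ≤ R) (hw₀ : ∀ r ∈ Icc 0 R, 0 ≤ w r)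
    (hu1 : ∀ r ∈ Icc 0 R, u r < 1) (q : ℝ) : 0 ≤ ∫ r in 0..R, w r * (1 - u r) ^ q :=
  integral_nonneg hR fun r hr => mul_nonneg (hw₀ r hr) (rpow_nonneg (sub_pos.2 (hu1 r hr)).le _)

theorem IsWeakRadialSolution.energy_eq (hweak : IsWeakRadialSolution w R lam p u) (hR : 0 ≤ R)
    (hw : IntervalIntegrable w volume 0 R) (hu : ContDiff ℝ 1 u) (hu1 : ∀ r ∈ Icc 0 R, u r < 1)
    (huR : u R = 0) (q : ℝ) :
    q * ∫ r in 0..R, w r * (1 - u r) ^ (-(q + 1)) * deriv u r ^ 2 =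
      lam * ((∫ r in 0..R, w r * (1 - u r) ^ (-(q + p))) -
        ∫ r in 0..R, w r * (1 - u r) ^ (-p)) := by
  obtain ⟨φ, hφ, hφu⟩ := exists_contDiff_eq_one_sub_rpow_sub_one hu isCompact_Icc hu1 q
  have hφR : φ R = 0 := by simp [(hφu R (right_mem_Icc.2 hR)).1, huR]
  have hint := intervalIntegrable_mul_one_sub_rpow hR hw hu.continuous.continuousOn hu1
  rw [← uIcc_of_le hR] at hφu hu1
  calc q * ∫ r in 0..R, w r * (1 - u r) ^ (-(q + 1)) * deriv u r ^ 2
    _ = ∫ r in 0..R, w r * deriv u r * deriv φ r := by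
      rw [← intervalIntegral.integral_const_mul]
      refine integral_congr fun r hr => ?_
      simp only [(hφu r hr).2]
      ring
    _ = lam * ∫ r in 0..R, w r * (1 - u r) ^ (-p) * φ r := hweak φ hφ hφR
    _ = _ := by
      rw [← intervalIntegral.integral_sub (hint _) (hint _)]
      congr 1
      refine integral_congr fun r hr => ?_
      simp only [(hφu r hr).1, neg_add, rpow_add (sub_pos.2 (hu1 r hr))]
      ring

theorem IsRadiallySemistable.energy_le (hstab : IsRadiallySemistable w R lam p u) (hR : 0 ≤ R)
    (hw : IntervalIntegrable w volume 0 R) (hu : ContDiff ℝ 1 u) (hu1 : ∀ r ∈ Icc 0 R, u r < 1)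
    (huR : u R = 0) (t : ℝ) :
    p * lam * ((∫ r in 0..R, w r * (1 - u r) ^ (-(2 * t + p + 1))) -
        2 * (∫ r in 0..R, w r * (1 - u r) ^ (-(t + p + 1))) +
        ∫ r in 0..R, w r * (1 - u r) ^ (-(p + 1))) ≤
      t ^ 2 * ∫ r in 0..R, w r * (1 - u r) ^ (-(2 * t + 2)) * deriv u r ^ 2 := by
  obtain ⟨ξ, hξ, hξu⟩ := exists_contDiff_eq_one_sub_rpow_sub_one hu isCompact_Icc hu1 t
  have hξR : ξ R = 0 := by simp [(hξu R (right_mem_Icc.2 hR)).1, huR]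
  have hint := intervalIntegrable_mul_one_sub_rpow hR hw hu.continuous.continuousOn hu1
  rw [← uIcc_of_le hR] at hξu hu1
  calc p * lam * ((∫ r in 0..R, w r * (1 - u r) ^ (-(2 * t + p + 1))) -
        2 * (∫ r in 0..R, w r * (1 - u r) ^ (-(t + p + 1))) +
        ∫ r in 0..R, w r * (1 - u r) ^ (-(p + 1)))
    _ = p * lam * ∫ r in 0..R, w r * (1 - u r) ^ (-(p + 1)) * ξ r ^ 2 := by
      rw [← intervalIntegral.integral_const_mul,
        ← intervalIntegral.integral_sub (hint _) ((hint _).const_mul 2),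
        ← intervalIntegral.integral_add ((hint _).sub ((hint _).const_mul 2)) (hint _)]
      congr 1
      refine integral_congr fun r hr => ?_
      have hpos := sub_pos.2 (hu1 r hr)
      simp only [(hξu r hr).1, show -(2 * t + p + 1) = -(p + 1) + -t + -t by ring,
        show -(t + p + 1) = -(p + 1) + -t by ring, rpow_add hpos _ (-t)]
      ring
    _ ≤ ∫ r in 0..R, w r * deriv ξ r ^ 2 := hstab ξ hξ hξR
    _ = _ := by
      rw [← intervalIntegral.integral_const_mul]
      refine integral_congr fun r hr => ?_
      simp only [(hξu r hr).2, show -(2 * t + 2) = -(t + 1) + -(t + 1) by ring,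
        rpow_add (sub_pos.2 (hu1 r hr)) (-(t + 1))]
      ring

theorem integral_mul_one_sub_rpow_le_mul_integral (hR : 0 ≤ R)
    (hw : IntervalIntegrable w volume 0 R) (hw₀ : ∀ r ∈ Icc 0 R, 0 ≤ w r)
    (hlam : 0 < lam) (ht : 0 ≤ 2 * t + 1) (htp : t ^ 2 < p * (2 * t + 1))
    (hu : ContDiff ℝ 1 u) (hu1 : ∀ r ∈ Icc 0 R, u r < 1) (huR : u R = 0)
    (hstab : IsRadiallySemistable w R lam p u) (hweak : IsWeakRadialSolution w R lam p u) :
    ∫ r in 0..R, w r * (1 - u r) ^ (-(2 * t + p + 1)) ≤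
      2 * p * (2 * t + 1) / (p * (2 * t + 1) - t ^ 2) *
        ∫ r in 0..R, w r * (1 - u r) ^ (-(t + p + 1)) := by
  have hp : 0 < p * (2 * t + 1) := (sq_nonneg t).trans_lt htp
  have henergy := hweak.energy_eq hR hw hu hu1 huR (2 * t + 1)
  have hstable := hstab.energy_le hR hw hu hu1 huR t
  rw [show 2 * t + 1 + 1 = 2 * t + 2 by ring, show 2 * t + 1 + p = 2 * t + p + 1 by ring] at henergy
  have hI₀ := integral_mul_one_sub_rpow_nonneg hR hw₀ hu1 (-p)
  have hI₁ := integral_mul_one_sub_rpow_nonneg hR hw₀ hu1 (-(p + 1))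
  set I₀ := ∫ r in 0..R, w r * (1 - u r) ^ (-p)
  set I₁ := ∫ r in 0..R, w r * (1 - u r) ^ (-(p + 1))
  set A := ∫ r in 0..R, w r * (1 - u r) ^ (-(2 * t + p + 1))
  set B := ∫ r in 0..R, w r * (1 - u r) ^ (-(t + p + 1))
  have gradient_eliminated : p * (2 * t + 1) * (A - 2 * B + I₁) ≤ t ^ 2 * (A - I₀) := by
    refine le_of_mul_le_mul_left ?_ hlam
    linear_combination (2 * t + 1) * hstable + t ^ 2 * henergy
  rw [div_mul_eq_mul_div, le_div_iff₀ (sub_pos.2 htp)]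
  linear_combination gradient_eliminated + mul_nonneg hp.le hI₁ + t ^ 2 * hI₀

theorem integral_mul_one_sub_rpow_le (hR : 0 ≤ R)
    (hw : IntervalIntegrable w volume 0 R) (hw₀ : ∀ r ∈ Icc 0 R, 0 ≤ w r)
    (hlam : 0 < lam) (ht : 0 < t) (htp : t ^ 2 < p * (2 * t + 1))
    (hu : ContDiff ℝ 1 u) (hu1 : ∀ r ∈ Icc 0 R, u r < 1) (huR : u R = 0)
    (hstab : IsRadiallySemistable w R lam p u) (hweak : IsWeakRadialSolution w R lam p u) :
    ∫ r in 0..R, w r * (1 - u r) ^ (-(2 * t + p + 1)) ≤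
      (2 * p * (2 * t + 1) / (p * (2 * t + 1) - t ^ 2)) ^ ((2 * t + p + 1) / t) *
        ∫ r in 0..R, w r := by
  have hp : 0 < p :=
    (mul_pos_iff_of_pos_right (by positivity)).1 ((sq_nonneg t).trans_lt htp)
  have hlower := integral_mul_one_sub_rpow_le_mul_integral hR hw hw₀ hlam (by positivity) htp
    hu hu1 huR hstab hweak
  have hint := intervalIntegrable_mul_one_sub_rpow hR hw hu.continuous.continuousOn hu1
  have hintα := hint (-(t + p + 1))
  have hintβ := hint (-(2 * t + p + 1))
  have hC : 0 ≤ 2 * p * (2 * t + 1) / (p * (2 * t + 1) - t ^ 2) :=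
    div_nonneg (by positivity) (sub_pos.2 htp).le
  have hae : ∀ᵐ r ∂volume.restrict (Ioc 0 R), r ∈ Icc 0 R :=
    (ae_restrict_mem measurableSet_Ioc).mono fun r hr => Ioc_subset_Icc_self hr
  rw [intervalIntegrable_iff_integrableOn_Ioc_of_le hR] at hw hintα hintβ
  simp only [rpow_neg_eq_inv_rpow, integral_of_le hR] at hlower hintα hintβ ⊢
  convert integral_mul_rpow_le_of_le_mul_integral_s12 (by positivity) (by linarith) hC
    (hae.mono hw₀) (hae.mono fun r hr => inv_nonneg.2 (sub_pos.2 (hu1 r hr)).le)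
    hw hintα hintβ hlower using 4
  ring

theorem integral_mul_rpow_le_integral_mul_one_sub_rpow {D : ℝ → ℝ} {q : ℝ} (hR : 0 ≤ R)
    (hw : IntervalIntegrable w volume 0 R) (hw₀ : ∀ r ∈ Icc 0 R, 0 ≤ w r)
    (hu : ContinuousOn u (Icc 0 R)) (hu1 : ∀ r ∈ Icc 0 R, u r < 1)
    (hD : ContinuousOn D (Icc 0 R)) (huD : ∀ r ∈ Icc 0 R, 1 - u r ≤ D r) (hq : q ≤ 0) :
    ∫ r in 0..R, w r * D r ^ q ≤ ∫ r in 0..R, w r * (1 - u r) ^ q := by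
  have hD_pos : ∀ r ∈ Icc 0 R, 0 < D r := fun r hr => (sub_pos.2 (hu1 r hr)).trans_le (huD r hr)
  have hint : IntervalIntegrable (fun r => w r * D r ^ q) volume 0 R := by
    rw [← uIcc_of_le hR] at hD hD_pos
    exact intervalIntegrable_mul_rpow hw hD (fun r hr => (hD_pos r hr).ne') q
  exact integral_mono_on hR hint (intervalIntegrable_mul_one_sub_rpow hR hw hu hu1 q) fun r hr =>
    mul_le_mul_of_nonneg_left
      (rpow_le_rpow_of_nonpos (sub_pos.2 (hu1 r hr)) (huD r hr) hq) (hw₀ r hr)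

theorem radial_mems_barrier_estimate_general {K : ℝ} (hR : 0 ≤ R)
    (hw : IntervalIntegrable w volume 0 R) (hw₀ : ∀ r ∈ Icc 0 R, 0 ≤ w r)
    (hlam : 0 < lam) (ht : 0 < t) (htp : t ^ 2 < p * (2 * t + 1))
    (hu : ContDiff ℝ 1 u) (hu1 : ∀ r ∈ Icc 0 R, u r < 1) (huR : u R = 0)
    (hstab : IsRadiallySemistable w R lam p u) (hweak : IsWeakRadialSolution w R lam p u)
    (hosc : ∀ r ∈ Icc 0 R, u 0 - u r ≤ K * r) :
    ∫ r in 0..R, w r * (1 - u 0 + K * r) ^ (-(2 * t + p + 1)) ≤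
      (2 * p * (2 * t + 1) / (p * (2 * t + 1) - t ^ 2)) ^ ((2 * t + p + 1) / t) *
        ∫ r in 0..R, w r := by
  have hp : 0 < p :=
    (mul_pos_iff_of_pos_right (by positivity)).1 ((sq_nonneg t).trans_lt htp)
  calc ∫ r in 0..R, w r * (1 - u 0 + K * r) ^ (-(2 * t + p + 1))
    _ ≤ ∫ r in 0..R, w r * (1 - u r) ^ (-(2 * t + p + 1)) :=
      integral_mul_rpow_le_integral_mul_one_sub_rpow hR hw hw₀ hu.continuous.continuousOn hu1
        (by fun_prop) (fun r hr => by linarith [hosc r hr]) (neg_nonpos.2 (by positivity))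
    _ ≤ _ := integral_mul_one_sub_rpow_le hR hw hw₀ hlam ht htp hu hu1 huR hstab hweak

end Estimates

theorem radial_mems_barrier_estimate
    (N : ℕ) (hN : 1 ≤ N) (R : ℝ) (hR : 0 < R)
    (a ψ : ℝ → ℝ) (ha : ContinuousOn a (Set.Icc 0 R))
    (hψ : ContinuousOn ψ (Set.Icc 0 R)) (hψ0 : ∀ r ∈ Set.Icc (0:ℝ) R, 0 ≤ ψ r)
    (w : ℝ → ℝ) (hw : ∀ r, w r = exp (a r) * ψ r ^ (N - 1))
    (lam t : ℝ) (hlam : 0 < lam) (ht : 0 < t) (ht' : t < 2 + Real.sqrt 6)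
    (u : ℝ → ℝ) (hu : ContDiff ℝ 1 u)
    (hu01 : ∀ r ∈ Set.Icc (0:ℝ) R, 0 ≤ u r ∧ u r < 1) (huR : u R = 0)
    (hmono : AntitoneOn u (Set.Icc 0 R))
    (hstab : ∀ ξ : ℝ → ℝ, ContDiff ℝ 1 ξ → ξ R = 0 →
      ∫ r in (0:ℝ)..R, w r * (deriv ξ r)^2 ≥
        2 * lam * ∫ r in (0:ℝ)..R, w r * (1 - u r) ^ (-(3:ℝ)) * (ξ r)^2)
    (hweak : ∀ φ : ℝ → ℝ, ContDiff ℝ 1 φ → φ R = 0 →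
      ∫ r in (0:ℝ)..R, w r * deriv u r * deriv φ r =
        lam * ∫ r in (0:ℝ)..R, w r * (1 - u r) ^ (-(2:ℝ)) * φ r)
    (K : ℝ) (hK : 0 ≤ K) (hosc : ∀ r ∈ Set.Icc (0:ℝ) R, u 0 - u r ≤ K * r) :
    ∫ r in (0:ℝ)..R, w r * (1 - u 0 + K * r) ^ (-(2*t+3)) ≤
      (4*(2*t+1)/(2+4*t-t^2)) ^ ((2*t+3)/t) * ∫ r in (0:ℝ)..R, w r := by
  have hw_cont : ContinuousOn w (Icc 0 R) := (ha.rexp.mul (hψ.pow _)).congr fun r _ => hw r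
  have hw₀ : ∀ r ∈ Icc 0 R, 0 ≤ w r := fun r hr =>
    hw r ▸ mul_nonneg (exp_pos _).le (pow_nonneg (hψ0 r hr) _)
  have htp : t ^ 2 < 2 * (2 * t + 1) := by
    have h2 : 2 < √6 := lt_sqrt_of_sq_lt (by norm_num)
    have : (t - 2) ^ 2 < 6 := sq_lt.2 ⟨by linarith, by linarith⟩
    linarith
  have hstab₂ : IsRadiallySemistable w R lam 2 u := by
    simpa only [IsRadiallySemistable, show (2:ℝ) + 1 = 3 by norm_num] using hstab
  have hgeneral := radial_mems_barrier_estimate_general hR.le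
    (hw_cont.intervalIntegrable_of_Icc hR.le) hw₀ hlam ht htp hu (fun r hr => (hu01 r hr).2) huR
    hstab₂ hweak hosc
  rwa [show 2 * t + 2 + 1 = 2 * t + 3 by ring, show (2:ℝ) * 2 = 4 by norm_num,
    show 2 * (2 * t + 1) - t ^ 2 = 2 + 4 * t - t ^ 2 by ring] at hgeneral
end
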